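/- For every t > 0 and every y ∈ X, the Bochner integral ν ∫₀^∞ Θ φ_ν(Θ) C(t^ν Θ) y dΘ is well defined and its norm is at most (ν L_μ / t^{νμ}) · (Γ(2−μ)/Γ(1+ν(1−μ))) · ‖y‖. (This is the bound ‖A^μ K_ν(t)‖ ≤ ν L_μ t^{−νμ} Γ(2−μ)/Γ(1+ν(1−μ)) of Lemma 2.2(ii), where C(s) plays the role of A^μ T(s).) -/

import Mathlib

/-!
The bound on `‖C s‖` dominates the integrand by a constant times `Θ ^ (1 - μ) * φ_ν Θ`, so everything
rests on `φ_ν ≥ 0` and on the moment of order `1 - μ` of `φ_ν`, which have to be derived from the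
series defining `ψ_ν`.

*Integral representation* (`psiNu_eq_stableDensity`). Integrating the exponential series of
`exp (-(i r) ^ ν)` termwise against `exp (-(ε - i u) r)` and letting `ε → 0` identifies `ψ_ν` with the
Fourier inversion integral `stableDensity`, which is bounded and continuous.

*Laplace transform* (`integral_exp_mul_stableDensity`). By Fubini and Cauchy's formula for
`exp (-z ^ ν)` on the right half-plane (`re_integral_stableLap_div`), the Laplace transform of
`stableDensity` is `s ↦ exp (-s ^ ν)`.

*Positivity* (`stableDensity_nonneg`). The function `exp (-s ^ ν)` is completely monotone, so all the
integrals `∫ u ^ n exp (-s u) ψ_ν(u) du` are nonnegative. For `s = (n + 1) / x` the weights concentrate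
at `u = x` as `n → ∞`, which forces `ψ_ν(x) ≥ 0` (`nonneg_of_laplace`).

*Moments* (`negMoment_stableDensity`, `moment_phiNu`). Negative powers of `u` are superpositions of
exponentials, so Tonelli reduces the negative moments of `ψ_ν` to the Gamma integral of
`s ^ (a - 1) exp (-s ^ ν)`; order zero follows from Fatou's lemma. The substitution `u = Θ ^ (-1 / ν)`
turns them into the moments of `φ_ν`. Only the upper bound for the moments is needed.
-/

open MeasureTheory

/-- The `n`-th term (for original index `n+1 ≥ 1`) of the series defining the
Wright-type function `ψ_ν`. -/
noncomputable def wrightTerm (ν Θ : ℝ) (n : ℕ) : ℝ :=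
  (-1 : ℝ) ^ n * Θ ^ (-(ν * (n + 1 : ℝ)) - 1) *
    (Real.Gamma ((n + 1 : ℝ) * ν + 1) / (Nat.factorial (n + 1) : ℝ)) *
    Real.sin ((n + 1 : ℝ) * Real.pi * ν)

/-- The Wright-type function
`ψ_ν(Θ) = (1/π) Σ_{n=1}^∞ (-1)^{n-1} Θ^{-νn-1} (Γ(nν+1)/n!) sin(nπν)`. -/
noncomputable def psiNu (ν Θ : ℝ) : ℝ :=
  (1 / Real.pi) * ∑' n : ℕ, wrightTerm ν Θ n

/-- The probability density `φ_ν(Θ) = (1/ν) Θ^{-1-1/ν} ψ_ν(Θ^{-1/ν})`. -/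
noncomputable def phiNu (ν Θ : ℝ) : ℝ :=
  (1 / ν) * Θ ^ (-1 - 1 / ν) * psiNu ν (Θ ^ (-(1 / ν)))

section StableDensity

open Set Filter Topology

/-! ### Gamma integrals and the growth of Gamma values -/

lemma integrableOn_rpow_exp {a r : ℝ} (ha : 0 < a) (hr : 0 < r) :
    IntegrableOn (fun t : ℝ => t ^ (a - 1) * Real.exp (-(r * t))) (Ioi 0) := by
  have h := integrableOn_rpow_mul_exp_neg_mul_rpow (p := 1) (s := a - 1) (b := r) (by linarith)
    one_pos hr
  simpa [Real.rpow_one, neg_mul] using h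

/-- The Gamma integral with a complex exponential rate. It extends the formula for real rates to the
right half-plane by the identity theorem, the left-hand side being the complex moment generating
function of the measure `t ^ (a - 1) dt`. -/
lemma integral_rpow_cexp {a : ℝ} (ha : 0 < a) {z : ℂ} (hz : 0 < z.re) :
    ∫ t : ℝ in Ioi 0, ((t ^ (a - 1) : ℝ) : ℂ) * Complex.exp (-(z * t)) =
      (1 / z) ^ (a : ℂ) * (Real.Gamma a : ℂ) := by
  set ρ : ℝ → NNReal := fun t => (t ^ (a - 1)).toNNReal with hρ
  have hρm : Measurable ρ := by
    apply Measurable.real_toNNReal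
    exact measurable_id.pow_const _
  set m : Measure ℝ := (volume.restrict (Ioi 0)).withDensity (fun t => (ρ t : ENNReal)) with hm
  have hmgf : ∀ w : ℂ, ProbabilityTheory.complexMGF id m (-w) =
      ∫ t : ℝ in Ioi 0, ((t ^ (a - 1) : ℝ) : ℂ) * Complex.exp (-(w * t)) := by
    intro w
    rw [ProbabilityTheory.complexMGF, hm, integral_withDensity_eq_integral_smul hρm]
    refine setIntegral_congr_fun measurableSet_Ioi fun t ht => ?_
    have : (0 : ℝ) ≤ t ^ (a - 1) := Real.rpow_nonneg (le_of_lt ht) _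
    simp [hρ, NNReal.smul_def, this]
  have hset : Iio (0 : ℝ) ⊆ interior (ProbabilityTheory.integrableExpSet id m) := by
    apply interior_maximal _ isOpen_Iio
    intro x hx
    change Integrable _ _
    rw [hm, integrable_withDensity_iff_integrable_smul hρm]
    have := integrableOn_rpow_exp ha (r := -x) (by simpa using hx)
    refine this.congr_fun (fun t ht => ?_) measurableSet_Ioi
    have : (0 : ℝ) ≤ t ^ (a - 1) := Real.rpow_nonneg (le_of_lt ht) _
    simp [hρ, NNReal.smul_def, this]
  have hopen : IsOpen {w : ℂ | 0 < w.re} := isOpen_lt continuous_const Complex.continuous_re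
  have h1 : AnalyticOnNhd ℂ (fun w : ℂ => ProbabilityTheory.complexMGF id m (-w))
      {w : ℂ | 0 < w.re} := by
    apply DifferentiableOn.analyticOnNhd _ hopen
    intro w hw
    have : (-w).re ∈ interior (ProbabilityTheory.integrableExpSet id m) :=
      hset (by simpa using hw)
    have h2 := (ProbabilityTheory.hasDerivAt_complexMGF this).differentiableAt
    exact (h2.comp w differentiableAt_id.neg).differentiableWithinAt
  have h2 : AnalyticOnNhd ℂ (fun w : ℂ => (1 / w) ^ (a : ℂ) * (Real.Gamma a : ℂ))
      {w : ℂ | 0 < w.re} := by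
    apply DifferentiableOn.analyticOnNhd _ hopen
    intro w hw
    have hw0 : w ≠ 0 := by rintro rfl; simp at hw
    have : (1 / w) ∈ Complex.slitPlane := by
      left
      rw [one_div, Complex.inv_re]
      exact div_pos hw (Complex.normSq_pos.2 hw0)
    have h3 : DifferentiableAt ℂ (fun w : ℂ => 1 / w) w := by
      simpa using differentiableAt_inv hw0
    exact ((h3.cpow_const this).mul_const _).differentiableWithinAt
  have h3 := h1.eqOn_of_preconnected_of_frequently_eq h2
    (convex_halfSpace_re_gt 0).isPreconnected (z₀ := 1) (by simp) ?_
  · rw [← hmgf]; exact h3 hz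
  · -- the positive reals accumulate at `1`
    have ht : Tendsto (fun n : ℕ => ((1 + 1 / ((n : ℝ) + 1) : ℝ) : ℂ)) atTop (𝓝[≠] 1) := by
      apply tendsto_nhdsWithin_of_tendsto_nhds_of_eventually_within
      · have := (tendsto_one_div_add_atTop_nhds_zero_nat (𝕜 := ℝ)).const_add 1
        rw [add_zero] at this
        exact (Complex.continuous_ofReal.tendsto 1).comp this
      · refine Eventually.of_forall fun n => ?_
        simp only [mem_compl_iff, mem_singleton_iff]
        norm_cast
        have : (0 : ℝ) < 1 / ((n : ℝ) + 1) := by positivity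
        intro h; push_cast at h; linarith
    refine ht.frequently (Frequently.of_forall fun n => ?_)
    have hr : (0 : ℝ) < 1 + 1 / ((n : ℝ) + 1) := by positivity
    rw [hmgf, ← Complex.Gamma_ofReal, ← Complex.integral_cpow_mul_exp_neg_mul_Ioi (by simpa) hr]
    refine setIntegral_congr_fun measurableSet_Ioi fun t ht => ?_
    rw [Complex.ofReal_cpow (le_of_lt ht)]
    push_cast; rfl

/-- Log-convexity of `Gamma` gives `Γ(n ν + 1) ≤ (n!) ^ ν`, and `(n!) ^ (ν - 1)` decays faster than
any geometric sequence. -/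
lemma summable_gamma_div_factorial {ν : ℝ} (hν : ν ∈ Ioo (0 : ℝ) 1) {x : ℝ} (hx : 0 < x) :
    Summable fun n : ℕ => Real.Gamma (n * ν + 1) / n.factorial * x ^ n := by
  obtain ⟨h0, h1⟩ := hν
  have hG : ∀ n : ℕ, Real.Gamma (n * ν + 1) ≤ (n.factorial : ℝ) ^ ν := by
    intro n
    have := Real.Gamma_mul_add_mul_le_rpow_Gamma_mul_rpow_Gamma (s := n + 1) (t := 1) (a := ν)
      (b := 1 - ν) (by positivity) one_pos h0 (by linarith) (by ring)
    rw [Real.Gamma_nat_eq_factorial, Real.Gamma_one, Real.one_rpow] at this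
    simp only [mul_one] at this
    convert this using 2; ring
  have hs : Summable fun n : ℕ => x ^ n * (n.factorial : ℝ) ^ (ν - 1) := by
    apply summable_of_ratio_test_tendsto_lt_one zero_lt_one
    · refine Eventually.of_forall fun n => ?_
      have : (0 : ℝ) < n.factorial := by exact_mod_cast n.factorial_pos
      positivity
    · have : ∀ n : ℕ, ‖x ^ (n + 1) * ((n + 1).factorial : ℝ) ^ (ν - 1)‖ /
          ‖x ^ n * (n.factorial : ℝ) ^ (ν - 1)‖ = x * ((n : ℝ) + 1) ^ (-(1 - ν)) := by
        intro n
        have hf : (0 : ℝ) < n.factorial := by exact_mod_cast n.factorial_pos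
        rw [Real.norm_of_nonneg (by positivity), Real.norm_of_nonneg (by positivity),
          Nat.factorial_succ]
        push_cast
        rw [Real.mul_rpow (by positivity) hf.le, pow_succ]
        have : (n.factorial : ℝ) ^ (ν - 1) ≠ 0 := by positivity
        field_simp
        congr 1; ring
      simp_rw [this]
      have h2 := (tendsto_rpow_neg_atTop (y := 1 - ν) (by linarith)).comp
        (tendsto_natCast_atTop_atTop.atTop_add (tendsto_const_nhds (x := (1 : ℝ))))
      simpa using h2.const_mul x
  refine hs.of_nonneg_of_le (fun n => ?_) (fun n => ?_)
  · have : 0 < Real.Gamma (n * ν + 1) := Real.Gamma_pos_of_pos (by positivity)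
    positivity
  · have hf : (0 : ℝ) < n.factorial := by exact_mod_cast n.factorial_pos
    rw [Real.rpow_sub_one hf.ne', mul_comm]
    gcongr
    exact hG n

/-! ### The Wright function as a Fourier inversion integral -/

/-- `z ↦ exp (-z ^ ν)`, with the principal branch of the power: on the right half-plane, the Laplace
transform of the one-sided `ν`-stable law. -/
noncomputable def stableLap (ν : ℝ) (z : ℂ) : ℂ := Complex.exp (-z ^ (ν : ℂ))

/-- The Fourier inversion integral
`(1/π) Re ∫₀^∞ exp (i u r) exp (-(i r) ^ ν) dr` of the one-sided `ν`-stable density. -/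
noncomputable def stableDensity (ν u : ℝ) : ℝ :=
  (1 / Real.pi) * (∫ r : ℝ in Ioi 0, Complex.exp (u * r * Complex.I) *
    stableLap ν (r * Complex.I)).re

lemma cpow_mul_I {ν r : ℝ} (hr : 0 < r) :
    ((r : ℂ) * Complex.I) ^ (ν : ℂ) =
      ((r ^ ν : ℝ) : ℂ) * Complex.exp ((Real.pi * ν / 2 : ℝ) * Complex.I) := by
  have hr' : (r : ℂ) ≠ 0 := by exact_mod_cast hr.ne'
  rw [Complex.cpow_def_of_ne_zero (mul_ne_zero hr' Complex.I_ne_zero),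
    Complex.log_ofReal_mul hr Complex.I_ne_zero, Complex.log_I, add_mul, Complex.exp_add,
    Real.rpow_def_of_pos hr]
  push_cast
  congr 2
  ring

lemma norm_stableLap_le {ν : ℝ} (hν : ν ∈ Ioo (0 : ℝ) 1) {z : ℂ} (hz : 0 ≤ z.re) :
    ‖stableLap ν z‖ ≤ Real.exp (-Real.cos (ν * (Real.pi / 2)) * ‖z‖ ^ ν) := by
  obtain ⟨h0, h1⟩ := hν
  rw [stableLap, Complex.norm_exp, Complex.neg_re, Complex.cpow_ofReal_re, neg_mul, mul_comm]
  gcongr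
  have ha := Complex.abs_arg_le_pi_div_two_iff.2 hz
  rw [← Real.cos_abs (z.arg * ν), abs_mul, abs_of_pos h0]
  apply Real.cos_le_cos_of_nonneg_of_le_pi (by positivity)
  · nlinarith [Real.pi_pos]
  · rw [mul_comm]; gcongr

lemma cos_pos_of_mem {ν : ℝ} (hν : ν ∈ Ioo (0 : ℝ) 1) : 0 < Real.cos (ν * (Real.pi / 2)) := by
  obtain ⟨h0, h1⟩ := hν
  apply Real.cos_pos_of_mem_Ioo
  constructor <;> nlinarith [Real.pi_pos]

lemma continuousAt_stableLap {ν : ℝ} (hν : 0 < ν) {z : ℂ} (hz : 0 ≤ z.re) :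
    ContinuousAt (stableLap ν) z :=
  (Complex.continuousAt_cpow_const_of_re_pos (Or.inl hz) (by simpa)).neg.cexp

lemma continuous_stableLap_mul_I {ν : ℝ} (hν : 0 < ν) :
    Continuous fun r : ℝ => stableLap ν (r * Complex.I) := by
  rw [continuous_iff_continuousAt]
  intro r
  exact ContinuousAt.comp (f := fun r : ℝ => (r : ℂ) * Complex.I)
    (continuousAt_stableLap hν (by simp)) (by fun_prop)

lemma integrableOn_stableBound {ν : ℝ} (hν : ν ∈ Ioo (0 : ℝ) 1) :
    IntegrableOn (fun r : ℝ => Real.exp (-Real.cos (ν * (Real.pi / 2)) * r ^ ν)) (Ioi 0) := by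
  have := integrableOn_rpow_mul_exp_neg_mul_rpow (s := 0) (by norm_num) hν.1 (cos_pos_of_mem hν)
  simpa using this

lemma norm_stableLap_mul_I_le {ν : ℝ} (hν : ν ∈ Ioo (0 : ℝ) 1) {r : ℝ} (hr : 0 < r) :
    ‖stableLap ν (r * Complex.I)‖ ≤ Real.exp (-Real.cos (ν * (Real.pi / 2)) * r ^ ν) := by
  have := norm_stableLap_le hν (z := r * Complex.I) (by simp)
  simpa [abs_of_pos hr] using this

/-- Termwise integration of the exponential series of `exp (-(i r) ^ ν)` against a decaying
exponential. -/
lemma integral_cexp_mul_stableLap {ν : ℝ} (hν : ν ∈ Ioo (0 : ℝ) 1) {w : ℂ} (hw : 0 < w.re) :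
    ∫ r : ℝ in Ioi 0, Complex.exp (-(w * r)) * stableLap ν (r * Complex.I) =
      ∑' n : ℕ, (-Complex.exp ((Real.pi * ν / 2 : ℝ) * Complex.I)) ^ n / n.factorial *
        ((1 / w) ^ ((n * ν + 1 : ℝ) : ℂ) * (Real.Gamma (n * ν + 1) : ℂ)) := by
  set ω := Complex.exp ((Real.pi * ν / 2 : ℝ) * Complex.I) with hω
  have hω1 : ‖ω‖ = 1 := Complex.norm_exp_ofReal_mul_I _
  have hpos : ∀ n : ℕ, 0 < n * ν + 1 := fun n => by
    have := hν.1; positivity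
  set F : ℕ → ℝ → ℂ := fun n r => (-ω) ^ n / n.factorial *
    (((r ^ ((n * ν + 1) - 1) : ℝ) : ℂ) * Complex.exp (-(w * r))) with hF
  have hnorm : ∀ n : ℕ, ∀ r ∈ Ioi (0 : ℝ), ‖F n r‖ =
      1 / n.factorial * (r ^ ((n * ν + 1) - 1) * Real.exp (-(w.re * r))) := by
    intro n r hr
    have : (0 : ℝ) ≤ r ^ ((n * ν + 1) - 1) := Real.rpow_nonneg (le_of_lt hr) _
    simp only [hF]
    rw [norm_mul, norm_div, norm_pow, norm_neg, hω1, norm_mul, Complex.norm_of_nonneg this,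
      Complex.norm_exp]
    simp
  have hint : ∀ n : ℕ, IntegrableOn (F n) (Ioi 0) := by
    intro n
    have h1 : IntegrableOn (fun r => ‖F n r‖) (Ioi 0) := by
      refine IntegrableOn.congr_fun ?_ (fun r hr => (hnorm n r hr).symm) measurableSet_Ioi
      exact (integrableOn_rpow_exp (hpos n) hw).const_mul _
    refine (integrable_norm_iff ?_).1 h1
    apply Measurable.aestronglyMeasurable
    simp only [hF]
    fun_prop
  have hI : ∀ n : ℕ, ∫ r in Ioi (0 : ℝ), ‖F n r‖ =
      (1 / w.re) * (Real.Gamma (n * ν + 1) / n.factorial * ((1 / w.re) ^ ν) ^ n) := by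
    intro n
    rw [setIntegral_congr_fun measurableSet_Ioi (hnorm n), integral_const_mul,
      Real.integral_rpow_mul_exp_neg_mul_Ioi (hpos n) hw, Real.rpow_add_one (by positivity),
      mul_comm (n : ℝ) ν, Real.rpow_mul (by positivity), Real.rpow_natCast]
    ring
  have hsum := hasSum_integral_of_summable_integral_norm hint (by
    simp_rw [hI]
    exact (summable_gamma_div_factorial hν (by positivity)).mul_left _)
  have hl : ∫ r : ℝ in Ioi 0, Complex.exp (-(w * r)) * stableLap ν (r * Complex.I) =
      ∫ r : ℝ in Ioi 0, ∑' n, F n r := by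
    refine setIntegral_congr_fun measurableSet_Ioi fun r hr => ?_
    have hr' : (0 : ℝ) < r := hr
    have hterm : ∀ n : ℕ, F n r =
        Complex.exp (-(w * r)) * ((-(((r ^ ν : ℝ) : ℂ) * ω)) ^ n / n.factorial) := by
      intro n
      simp only [hF]
      rw [add_sub_cancel_right, mul_comm (n : ℝ) ν, Real.rpow_mul hr'.le, Real.rpow_natCast]
      push_cast
      rw [neg_pow ω, neg_pow (_ * ω), mul_pow]
      ring
    simp only [hterm]
    rw [tsum_mul_left, stableLap, cpow_mul_I hr', ← hω]
    congr 1
    rw [Complex.exp_eq_exp_ℂ, NormedSpace.exp_eq_tsum_div]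
  rw [hl, ← hsum.tsum_eq]
  refine tsum_congr fun n => ?_
  simp only [hF]
  rw [integral_const_mul, integral_rpow_cexp (hpos n) hw]

/-- The defining series of `psiNu` represents the Fourier inversion integral: in
`integral_cexp_mul_stableLap` take `w = ε - i u` and let `ε → 0`. -/
lemma psiNu_eq_stableDensity {ν : ℝ} (hν : ν ∈ Ioo (0 : ℝ) 1) {u : ℝ} (hu : 0 < u) :
    psiNu ν u = stableDensity ν u := by
  set ω := Complex.exp ((Real.pi * ν / 2 : ℝ) * Complex.I) with hω
  have hω1 : ‖ω‖ = 1 := Complex.norm_exp_ofReal_mul_I _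
  have hpos : ∀ n : ℕ, 0 < n * ν + 1 := fun n => by
    have := hν.1; positivity
  have hG : ∀ n : ℕ, 0 < Real.Gamma (n * ν + 1) := fun n => Real.Gamma_pos_of_pos (hpos n)
  have hu' : (u : ℂ) ≠ 0 := by exact_mod_cast hu.ne'
  set W : ℝ → ℂ := fun ε => ε - u * Complex.I with hW
  have hWc : Tendsto W (𝓝[>] 0) (𝓝 (-(u * Complex.I))) := by
    have : Continuous W := by fun_prop
    have h := this.tendsto 0
    simp only [hW, Complex.ofReal_zero, zero_sub] at h
    exact h.mono_left nhdsWithin_le_nhds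
  have hWn : ∀ ε, u ≤ ‖W ε‖ := by
    intro ε
    have := Complex.abs_im_le_norm (W ε)
    simpa [hW, abs_of_pos hu] using this
  set T : ℂ → ℕ → ℂ := fun w n => (-ω) ^ n / n.factorial *
        (w ^ ((n * ν + 1 : ℝ) : ℂ) * (Real.Gamma (n * ν + 1) : ℂ)) with hT
  have hinv : 1 / (-(u * Complex.I)) = ((1 / u : ℝ) : ℂ) * Complex.I := by
    have := Complex.I_ne_zero
    push_cast
    field_simp
    simp
  have hsum : Summable fun n : ℕ =>
      (1 / u) * (Real.Gamma (n * ν + 1) / n.factorial * ((1 / u) ^ ν) ^ n) :=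
    (summable_gamma_div_factorial hν (by positivity)).mul_left _
  have hTn : ∀ w : ℂ, ‖w‖ ≤ 1 / u → ∀ n : ℕ, ‖T w n‖ ≤
      (1 / u) * (Real.Gamma (n * ν + 1) / n.factorial * ((1 / u) ^ ν) ^ n) := by
    intro w hw n
    simp only [hT]
    rw [norm_mul, norm_div, norm_pow, norm_neg, hω1, norm_mul,
      Complex.norm_cpow_real, Complex.norm_of_nonneg (hG n).le]
    have h1 : ‖w‖ ^ (n * ν + 1) ≤ (1 / u) ^ (n * ν + 1) :=
      Real.rpow_le_rpow (norm_nonneg _) hw (hpos n).le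
    rw [Real.rpow_add_one (x := 1 / u) (by positivity), mul_comm (n : ℝ) ν,
      Real.rpow_mul (by positivity), Real.rpow_natCast] at h1
    rw [mul_comm ν] at h1
    have h2 : (0 : ℝ) < n.factorial := by exact_mod_cast n.factorial_pos
    have h3 := hG n
    calc _ = 1 / (n.factorial : ℝ) * (‖w‖ ^ (n * ν + 1) * Real.Gamma (n * ν + 1)) := by
          simp
      _ ≤ 1 / (n.factorial : ℝ) * ((((1 / u) ^ ν) ^ n * (1 / u)) * Real.Gamma (n * ν + 1)) := by
          gcongr
      _ = _ := by ring
  have hWi : ∀ ε, ‖1 / W ε‖ ≤ 1 / u := by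
    intro ε
    rw [norm_div, norm_one]
    exact one_div_le_one_div_of_le hu (hWn ε)
  have hlim1 : Tendsto (fun ε => ∑' n, T (1 / W ε) n) (𝓝[>] 0)
      (𝓝 (∑' n, T (1 / (-(u * Complex.I))) n)) := by
    refine tendsto_tsum_of_dominated_convergence hsum (fun n => ?_) (Eventually.of_forall fun ε n =>
      hTn _ (hWi ε) n)
    have hne : -(u * Complex.I) ≠ 0 := neg_ne_zero.2 (mul_ne_zero hu' Complex.I_ne_zero)
    have h1 : Tendsto (fun ε => 1 / W ε) (𝓝[>] 0) (𝓝 (1 / (-(u * Complex.I)))) :=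
      tendsto_const_nhds.div hWc hne
    have h2 : ContinuousAt (fun z : ℂ => z ^ ((n * ν + 1 : ℝ) : ℂ)) (1 / (-(u * Complex.I))) := by
      refine Complex.continuousAt_cpow_const_of_re_pos (Or.inl ?_) (by simpa using hpos n)
      rw [hinv]; simp
    exact ((h2.tendsto.comp h1).mul_const _).const_mul _
  have hlim2 : Tendsto (fun ε : ℝ => ∫ r : ℝ in Ioi 0,
      Complex.exp (-(W ε * r)) * stableLap ν (r * Complex.I)) (𝓝[>] 0)
      (𝓝 (∫ r : ℝ in Ioi 0, Complex.exp (u * r * Complex.I) * stableLap ν (r * Complex.I))) := by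
    refine tendsto_integral_filter_of_dominated_convergence _ ?_ ?_ (integrableOn_stableBound hν) ?_
    · refine Eventually.of_forall fun ε => ?_
      apply Continuous.aestronglyMeasurable
      have := continuous_stableLap_mul_I hν.1
      fun_prop
    · filter_upwards [self_mem_nhdsWithin] with ε hε
      refine (ae_restrict_iff' measurableSet_Ioi).2 (Eventually.of_forall fun r hr => ?_)
      rw [norm_mul, Complex.norm_exp]
      have h1 : Real.exp (-(W ε * r)).re ≤ 1 := by
        rw [Real.exp_le_one_iff]
        simp only [hW]
        simp
        exact mul_nonneg (le_of_lt hε) (le_of_lt hr)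
      calc _ ≤ 1 * Real.exp (-Real.cos (ν * (Real.pi / 2)) * r ^ ν) := by
            gcongr
            exact norm_stableLap_mul_I_le hν hr
        _ = _ := one_mul _
    · refine Eventually.of_forall fun r => ?_
      apply Tendsto.mul_const
      have : (u * r * Complex.I : ℂ) = -(-(u * Complex.I) * r) := by ring
      rw [this]
      exact (Complex.continuous_exp.tendsto _).comp (hWc.mul_const _).neg
  have heq := tendsto_nhds_unique (hlim2.congr' (by
    filter_upwards [self_mem_nhdsWithin] with ε hε
    exact integral_cexp_mul_stableLap hν (by simpa [hW] using hε))) hlim1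
  have hTs : Summable (T (1 / (-(u * Complex.I)))) := by
    refine Summable.of_norm_bounded hsum (hTn _ ?_)
    rw [hinv]; simp [abs_of_pos hu]
  have hre : ∀ n : ℕ, (T (1 / (-(u * Complex.I))) n).re =
      (-1) ^ (n + 1) * u ^ (-(ν * n) - 1) * (Real.Gamma (n * ν + 1) / n.factorial) *
        Real.sin (n * Real.pi * ν) := by
    intro n
    have h1 : T (1 / (-(u * Complex.I))) n =
        (((-1) ^ n * u ^ (-(ν * n) - 1) * (Real.Gamma (n * ν + 1) / n.factorial) : ℝ) : ℂ) *
          (Complex.I * Complex.exp ((n * Real.pi * ν : ℝ) * Complex.I)) := by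
      simp only [hT]
      rw [hinv, cpow_mul_I (by positivity), one_div, Real.inv_rpow hu.le, ← Real.rpow_neg hu.le,
        neg_pow, hω, ← Complex.exp_nat_mul]
      have h2 : Complex.I * Complex.exp ((n * Real.pi * ν : ℝ) * Complex.I) =
          Complex.exp (n * ((Real.pi * ν / 2 : ℝ) * Complex.I)) *
            Complex.exp ((Real.pi * (n * ν + 1) / 2 : ℝ) * Complex.I) := by
        have hI : Complex.I = Complex.exp (Real.pi / 2 * Complex.I) := by
          rw [Complex.exp_pi_div_two_mul_I]
        nth_rewrite 1 [hI]
        rw [← Complex.exp_add, ← Complex.exp_add]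
        congr 1
        push_cast
        ring
      rw [h2, show -(ν * n) - 1 = -(n * ν + 1) by ring]
      push_cast
      ring
    rw [h1, Complex.re_ofReal_mul]
    have : (Complex.I * Complex.exp ((n * Real.pi * ν : ℝ) * Complex.I)).re =
        -Real.sin (n * Real.pi * ν) := by
      rw [Complex.I_mul_re, Complex.exp_ofReal_mul_I_im]
    rw [this, pow_succ]
    ring
  rw [psiNu, stableDensity, heq, Complex.re_tsum hTs]
  congr 1
  have hs : Summable fun n => (T (1 / (-(u * Complex.I))) n).re :=
    (Complex.hasSum_re hTs.hasSum).summable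
  rw [hs.tsum_eq_zero_add, hre 0]
  simp only [CharP.cast_eq_zero, zero_mul, Real.sin_zero, mul_zero, zero_add]
  refine tsum_congr fun n => ?_
  rw [hre, wrightTerm]
  push_cast
  ring

/-! ### Cauchy's formula on the right half-plane -/

lemma integrableOn_stableLap_mul_I {ν : ℝ} (hν : ν ∈ Ioo (0 : ℝ) 1) :
    IntegrableOn (fun r : ℝ => stableLap ν (r * Complex.I)) (Ioi 0) :=
  (integrableOn_stableBound hν).mono'
    (continuous_stableLap_mul_I hν.1).aestronglyMeasurable
    ((ae_restrict_iff' measurableSet_Ioi).2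
      (Eventually.of_forall fun _ hr => norm_stableLap_mul_I_le hν hr))

lemma stableLap_ofReal {ν s : ℝ} (hs : 0 < s) :
    stableLap ν s = ((Real.exp (-s ^ ν) : ℝ) : ℂ) := by
  rw [stableLap, ← Complex.ofReal_cpow hs.le]
  push_cast; rfl

lemma sub_mul_I_ne {s : ℝ} (hs : 0 < s) (r : ℝ) : (s : ℂ) - r * Complex.I ≠ 0 := by
  intro h
  have := congrArg Complex.re h
  simp at this
  exact hs.ne' this

lemma le_norm_sub_mul_I (s r : ℝ) : s ≤ ‖(s : ℂ) - r * Complex.I‖ := by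
  have := Complex.re_le_norm ((s : ℂ) - r * Complex.I)
  simpa using this

lemma integrableOn_stableLap_div {ν : ℝ} (hν : ν ∈ Ioo (0 : ℝ) 1) {s : ℝ} (hs : 0 < s) :
    IntegrableOn (fun r : ℝ => stableLap ν (r * Complex.I) / (s - r * Complex.I)) (Ioi 0) := by
  refine ((integrableOn_stableLap_mul_I hν).norm.div_const s).mono' ?_ ?_
  · apply Continuous.aestronglyMeasurable
    exact (continuous_stableLap_mul_I hν.1).div (by fun_prop) (sub_mul_I_ne hs)
  · refine Eventually.of_forall fun r => ?_
    rw [norm_div]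
    gcongr
    exact le_norm_sub_mul_I s r

lemma integral_poisson_kernel {s : ℝ} (hs : 0 < s) :
    IntegrableOn (fun r : ℝ => 2 * s / (s ^ 2 + r ^ 2)) (Ioi 0) ∧
      ∫ r in Ioi (0 : ℝ), 2 * s / (s ^ 2 + r ^ 2) = Real.pi := by
  have h : ∀ r : ℝ, 2 * s / (s ^ 2 + r ^ 2) = (2 / s) * (1 + (s⁻¹ * r) ^ 2)⁻¹ := by
    intro r
    have : s ^ 2 + r ^ 2 ≠ 0 := by positivity
    field_simp
  simp_rw [h]
  constructor
  · exact ((integrable_inv_one_add_sq.comp_mul_left' (inv_pos.2 hs).ne').const_mul _).integrableOn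
  · rw [integral_const_mul, integral_comp_mul_left_Ioi (fun x => (1 + x ^ 2)⁻¹) 0 (inv_pos.2 hs),
      mul_zero, integral_Ioi_inv_one_add_sq]
    simp
    field_simp

/-- Cauchy's formula `(1/2π) ∫ f(i r) / (s - i r) dr = f(s)` on the right half-plane for
`f = stableLap ν`, folded onto `r > 0`. The function
`(f(z) - f(s) · 2 s / (s + z)) / (z - s)` has a removable singularity at `s` and is
`o(1 / |z|)` at infinity, so its integral over the boundary of the square `[0, R]²` vanishes and the
sides away from the origin contribute nothing in the limit; the side on the real axis is real and
disappears on taking imaginary parts. -/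
lemma re_integral_stableLap_div {ν : ℝ} (hν : ν ∈ Ioo (0 : ℝ) 1) {s : ℝ} (hs : 0 < s) :
    (∫ r : ℝ in Ioi 0, stableLap ν (r * Complex.I) / (s - r * Complex.I)).re =
      Real.pi * Real.exp (-s ^ ν) := by
  set c := Real.cos (ν * (Real.pi / 2)) with hc
  have hcpos : 0 < c := cos_pos_of_mem hν
  set E := Real.exp (-s ^ ν) with hE
  have hE1 : E ≤ 1 := by
    rw [hE, Real.exp_le_one_iff]
    have : 0 ≤ s ^ ν := by positivity
    linarith
  have hE0 : 0 < E := Real.exp_pos _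
  set H : ℂ → ℂ := fun z => stableLap ν z - (E : ℂ) * (2 * s / (s + z)) with hH
  have hsC : (s : ℂ) ≠ 0 := by exact_mod_cast hs.ne'
  have hHs : H s = 0 := by
    simp only [hH]
    rw [stableLap_ofReal hs, ← hE]
    field_simp
    ring
  have hne : ∀ z : ℂ, 0 ≤ z.re → (s : ℂ) + z ≠ 0 := by
    intro z hz h
    have := congrArg Complex.re h
    simp at this
    linarith
  have hHc : ∀ z : ℂ, 0 ≤ z.re → ContinuousAt H z := by
    intro z hz
    have h1 := continuousAt_stableLap hν.1 hz
    have h2 : ContinuousAt (fun z : ℂ => (E : ℂ) * (2 * s / (s + z))) z :=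
      continuousAt_const.mul (continuousAt_const.div (by fun_prop) (hne z hz))
    exact h1.sub h2
  have hHd : ∀ z : ℂ, 0 < z.re → DifferentiableAt ℂ H z := by
    intro z hz
    have h1 : DifferentiableAt ℂ (stableLap ν) z :=
      ((differentiableAt_id.cpow_const (Or.inl hz)).neg).cexp
    have h2 : DifferentiableAt ℂ (fun z : ℂ => (E : ℂ) * (2 * s / (s + z))) z :=
      (differentiableAt_const _).mul ((differentiableAt_const _).div (by fun_prop) (hne z hz.le))
    exact h1.sub h2
  set h := dslope H s with hh
  have hhne : ∀ z : ℂ, z ≠ s → h z = H z / (z - s) := by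
    intro z hz
    rw [hh, dslope_of_ne _ hz, slope_def_field, hHs, sub_zero]
  have hhc : ∀ z : ℂ, 0 ≤ z.re → ContinuousAt h z := by
    intro z hz
    by_cases hzs : z = s
    · subst hzs
      exact continuousAt_dslope_same.2 (hHd _ (by simpa using hs))
    · exact (continuousAt_dslope_of_ne hzs).2 (hHc z hz)
  -- the values of `h` on the imaginary axis
  have hhI : ∀ r : ℝ, h (r * Complex.I) = ((E * (2 * s / (s ^ 2 + r ^ 2)) : ℝ) : ℂ) -
      stableLap ν (r * Complex.I) / (s - r * Complex.I) := by
    intro r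
    have h1 := sub_mul_I_ne hs r
    have h2 : (s : ℂ) + r * Complex.I ≠ 0 := hne _ (by simp)
    have h3 : (r * Complex.I : ℂ) - s ≠ 0 := by
      rw [← neg_sub]; exact neg_ne_zero.2 h1
    rw [hhne _ (sub_ne_zero.1 h3)]
    have h4 : ((s : ℂ) ^ 2 + (r : ℂ) ^ 2) = (s + r * Complex.I) * (s - r * Complex.I) := by
      ring_nf; simp
    simp only [hH]
    push_cast
    rw [h4, ← neg_sub (s : ℂ) (r * Complex.I)]
    field_simp
    ring
  have hK := integral_poisson_kernel hs
  have hint1 : IntegrableOn (fun r : ℝ => ((E * (2 * s / (s ^ 2 + r ^ 2)) : ℝ) : ℂ)) (Ioi 0) :=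
    (hK.1.const_mul E).ofReal
  have hint2 := integrableOn_stableLap_div hν hs
  have hintI : IntegrableOn (fun r : ℝ => h (r * Complex.I)) (Ioi 0) := by
    simp_rw [hhI]
    exact hint1.sub hint2
  have hval : (∫ r : ℝ in Ioi 0, h (r * Complex.I)).re = E * Real.pi -
      (∫ r : ℝ in Ioi 0, stableLap ν (r * Complex.I) / (s - r * Complex.I)).re := by
    simp_rw [hhI]
    rw [integral_sub hint1 hint2, integral_complex_ofReal, integral_const_mul, hK.2, Complex.sub_re,
      Complex.ofReal_re]
  set M : ℝ → ℝ := fun R => (Real.exp (-c * R ^ ν) + 2 * s / R) / (R - s) with hM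
  have hbound : ∀ R : ℝ, s < R → ∀ z : ℂ, 0 ≤ z.re → R ≤ ‖z‖ → ‖h z‖ ≤ M R := by
    intro R hR z hz hzR
    have hR0 : 0 < R := hs.trans hR
    have hz1 : R - s ≤ ‖z - s‖ := by
      have := norm_sub_norm_le z s
      rw [Complex.norm_of_nonneg hs.le] at this
      linarith
    have hzs : z ≠ s := by
      rintro rfl
      rw [sub_self, norm_zero] at hz1; linarith
    have hz2 : ‖z‖ ≤ ‖(s : ℂ) + z‖ := by
      rw [Complex.norm_def, Complex.norm_def]
      apply Real.sqrt_le_sqrt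
      simp only [Complex.normSq_apply, Complex.add_re, Complex.add_im, Complex.ofReal_re,
        Complex.ofReal_im]
      nlinarith
    rw [hhne z hzs, norm_div]
    simp only [hM]
    have hRs : 0 < R - s := by linarith
    gcongr
    refine (norm_sub_le _ _).trans (add_le_add ?_ ?_)
    · refine (norm_stableLap_le hν hz).trans ?_
      rw [← hc]
      apply Real.exp_le_exp.2
      have : R ^ ν ≤ ‖z‖ ^ ν := Real.rpow_le_rpow hR0.le hzR hν.1.le
      nlinarith
    · rw [norm_mul, norm_div, Complex.norm_of_nonneg hE0.le]
      have : ‖(2 * s : ℂ)‖ = 2 * s := by simp [abs_of_pos hs]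
      rw [this]
      calc E * (2 * s / ‖(s : ℂ) + z‖) ≤ 1 * (2 * s / R) := by
            gcongr
            exact hzR.trans hz2
        _ = _ := one_mul _
  have hrect : ∀ R : ℝ, s < R → |(∫ y in (0 : ℝ)..R, h (y * Complex.I)).re| ≤ 2 * (M R * R) := by
    intro R hR
    have hR0 : 0 < R := hs.trans hR
    have h1 := Complex.integral_boundary_rect_eq_zero_of_differentiable_on_off_countable h 0
      ((R : ℂ) + R * Complex.I) {(s : ℂ)} (countable_singleton _) (by
        intro z hz
        apply (hhc z _).continuousWithinAt
        have := hz.1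
        simp [uIcc_of_le hR0.le] at this
        exact this.1) (by
        intro z hz
        have h2 := hz.1.1
        simp [hR0.le] at h2
        exact (differentiableAt_dslope_of_ne (by simpa using hz.2)).2 (hHd z h2.1))
    simp only [Complex.zero_re, Complex.zero_im, Complex.add_re, Complex.add_im, Complex.ofReal_re,
      Complex.ofReal_im, Complex.mul_re, Complex.mul_im, Complex.I_re, Complex.I_im, mul_zero,
      mul_one, zero_add, add_zero, sub_self, Complex.ofReal_zero, zero_mul, smul_eq_mul] at h1
    -- on the real axis `h` is real
    have hbot : (∫ x in (0 : ℝ)..R, h x).im = 0 := by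
      have : ∫ x in (0 : ℝ)..R, h x = ∫ x in (0 : ℝ)..R, (((h x).re : ℝ) : ℂ) := by
        refine intervalIntegral.integral_congr_ae ?_
        have hae : ∀ᵐ x : ℝ, x ≠ s := by
          simp [ae_iff]
        filter_upwards [hae] with x hx hx'
        rw [uIoc_of_le hR0.le] at hx'
        rw [hhne x (by exact_mod_cast hx)]
        simp only [hH]
        rw [stableLap_ofReal hx'.1]
        norm_cast
      rw [this, intervalIntegral.integral_ofReal, Complex.ofReal_im]
    have htop : ‖∫ x in (0 : ℝ)..R, h (x + R * Complex.I)‖ ≤ M R * R := by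
      have := intervalIntegral.norm_integral_le_of_norm_le_const (a := 0) (b := R) (C := M R)
        (f := fun x : ℝ => h (x + R * Complex.I)) (by
          intro x hx
          rw [uIoc_of_le hR0.le] at hx
          apply hbound R hR
          · simpa using hx.1.le
          · have := Complex.abs_im_le_norm ((x : ℂ) + R * Complex.I)
            simpa [abs_of_pos hR0] using this)
      simpa [abs_of_pos hR0] using this
    have hright : ‖∫ y in (0 : ℝ)..R, h (R + y * Complex.I)‖ ≤ M R * R := by
      have := intervalIntegral.norm_integral_le_of_norm_le_const (a := 0) (b := R) (C := M R)
        (f := fun y : ℝ => h (R + y * Complex.I)) (by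
          intro x hx
          apply hbound R hR
          · simpa using hR0.le
          · have := Complex.abs_re_le_norm ((R : ℂ) + x * Complex.I)
            simpa [abs_of_pos hR0] using this)
      simpa [abs_of_pos hR0] using this
    have h3 := congrArg Complex.im h1
    simp only [Complex.sub_im, Complex.add_im, Complex.I_mul_im, Complex.zero_im, hbot] at h3
    have h4 := (Complex.abs_im_le_norm _).trans htop
    have h5 := (Complex.abs_re_le_norm _).trans hright
    rw [abs_le] at h4 h5 ⊢
    constructor <;> linarith [h4.1, h4.2, h5.1, h5.2]
  have hMlim : Tendsto (fun R => 2 * (M R * R)) atTop (𝓝 0) := by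
    have h1 : Tendsto (fun R : ℝ => Real.exp (-c * R ^ ν) + 2 * s / R) atTop (𝓝 (0 + 0)) := by
      refine Tendsto.add ?_ (tendsto_const_nhds.div_atTop tendsto_id)
      apply Real.tendsto_exp_atBot.comp
      exact (tendsto_rpow_atTop hν.1).const_mul_atTop_of_neg (by linarith)
    have h2 : Tendsto (fun R : ℝ => R / (R - s)) atTop (𝓝 1) := by
      have h3 : Tendsto (fun R : ℝ => 1 + s / (R - s)) atTop (𝓝 (1 + 0)) :=
        tendsto_const_nhds.add (tendsto_const_nhds.div_atTop
          (tendsto_atTop_add_const_right _ (-s) tendsto_id))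
      rw [add_zero] at h3
      refine h3.congr' ?_
      filter_upwards [eventually_gt_atTop s] with R hR
      have : R - s ≠ 0 := by linarith [sub_pos.2 hR]
      field_simp
      ring
    have h4 := ((h1.mul h2).const_mul 2)
    simp only [add_zero, zero_mul, mul_zero] at h4
    refine h4.congr fun R => ?_
    simp only [hM]
    ring
  have hlim := (Complex.continuous_re.tendsto _).comp
    (intervalIntegral_tendsto_integral_Ioi 0 hintI tendsto_id)
  have hzero : Tendsto (fun R : ℝ => (∫ y in (0 : ℝ)..R, h (y * Complex.I)).re) atTop (𝓝 0) := by
    refine squeeze_zero_norm' ?_ hMlim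
    filter_upwards [eventually_gt_atTop s] with R hR
    exact hrect R hR
  have := tendsto_nhds_unique hlim hzero
  rw [hval] at this
  linarith

/-! ### The Laplace transform of the stable density -/

lemma continuous_stableDensity {ν : ℝ} (hν : ν ∈ Ioo (0 : ℝ) 1) :
    Continuous (stableDensity ν) := by
  have hc := continuous_stableLap_mul_I hν.1
  refine continuous_const.mul (Complex.continuous_re.comp ?_)
  refine continuous_of_dominated (bound := fun r : ℝ => ‖stableLap ν (r * Complex.I)‖)
    (fun u => ?_) (fun u => Eventually.of_forall fun r => ?_)
    (integrableOn_stableLap_mul_I hν).norm (Eventually.of_forall fun r => by fun_prop)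
  · apply Continuous.aestronglyMeasurable
    fun_prop
  · rw [norm_mul, Complex.norm_exp]
    simp

lemma exists_bound_stableDensity {ν : ℝ} :
    ∃ K : ℝ, 0 ≤ K ∧ ∀ u, |stableDensity ν u| ≤ K := by
  refine ⟨(1 / Real.pi) * ∫ r : ℝ in Ioi 0, ‖stableLap ν (r * Complex.I)‖,
    mul_nonneg (by positivity) (integral_nonneg fun _ => norm_nonneg _), fun u => ?_⟩
  rw [stableDensity, abs_mul, abs_of_pos (by positivity : 0 < 1 / Real.pi)]
  gcongr
  refine (Complex.abs_re_le_norm _).trans ((norm_integral_le_integral_norm _).trans (le_of_eq ?_))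
  congr 1
  ext r
  rw [norm_mul, Complex.norm_exp]
  simp

/-- The Laplace transform of the stable density: exchange the integrals and apply Cauchy's
formula. -/
lemma integral_exp_mul_stableDensity {ν : ℝ} (hν : ν ∈ Ioo (0 : ℝ) 1) {s : ℝ} (hs : 0 < s) :
    ∫ u in Ioi (0 : ℝ), Real.exp (-(s * u)) * stableDensity ν u = Real.exp (-s ^ ν) := by
  have hc := continuous_stableLap_mul_I hν.1
  set G : ℝ → ℝ → ℂ := fun u r => Complex.exp (-(s - r * Complex.I) * u) *
    stableLap ν (r * Complex.I) with hG
  have hexp : IntegrableOn (fun u : ℝ => Real.exp (-s * u)) (Ioi 0) :=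
    integrableOn_exp_mul_Ioi (by linarith) 0
  have hint : Integrable (Function.uncurry G)
      ((volume.restrict (Ioi 0)).prod (volume.restrict (Ioi 0))) := by
    refine (Integrable.mul_prod hexp (integrableOn_stableLap_mul_I hν).norm).mono' ?_ ?_
    · apply Continuous.aestronglyMeasurable
      simp only [hG, Function.uncurry_def]
      have : Continuous fun p : ℝ × ℝ => stableLap ν (p.2 * Complex.I) := hc.comp continuous_snd
      fun_prop
    · refine Eventually.of_forall fun p => ?_
      simp only [hG, Function.uncurry_def]
      rw [norm_mul, Complex.norm_exp]
      simp
  have h1 : ∀ u : ℝ, Real.exp (-(s * u)) * stableDensity ν u =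
      (1 / Real.pi) * (∫ r : ℝ in Ioi 0, G u r).re := by
    intro u
    have : ∫ r : ℝ in Ioi 0, G u r = (Real.exp (-(s * u)) : ℝ) *
        ∫ r : ℝ in Ioi 0, Complex.exp (u * r * Complex.I) * stableLap ν (r * Complex.I) := by
      rw [← integral_const_mul]
      congr 1
      ext r
      simp only [hG]
      rw [← mul_assoc, Complex.ofReal_exp, ← Complex.exp_add]
      congr 2
      push_cast
      ring
    rw [this, Complex.re_ofReal_mul, stableDensity]
    ring
  have h2 : ∀ r : ℝ, ∫ u : ℝ in Ioi 0, G u r =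
      stableLap ν (r * Complex.I) / (s - r * Complex.I) := by
    intro r
    simp only [hG]
    rw [integral_mul_const, integral_exp_mul_complex_Ioi (by simpa using hs)]
    have := sub_mul_I_ne hs r
    simp only [Complex.ofReal_zero, mul_zero, Complex.exp_zero]
    field_simp
  simp_rw [h1]
  have h3 : ∫ u : ℝ in Ioi 0, (∫ r : ℝ in Ioi 0, G u r).re =
      (∫ u : ℝ in Ioi 0, ∫ r : ℝ in Ioi 0, G u r).re := by
    exact integral_re (f := fun u => ∫ r : ℝ in Ioi 0, G u r) hint.integral_prod_left
  rw [integral_const_mul, h3, integral_integral_swap hint]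
  simp_rw [h2]
  rw [re_integral_stableLap_div hν hs]
  field_simp

/-! ### Complete monotonicity -/

/-- `f` is completely monotone on `(0, ∞)` up to order `n`: it is nonnegative and, if `n > 0`, minus
its derivative is completely monotone up to order `n - 1`. -/
def ComplMono : ℕ → (ℝ → ℝ) → Prop
  | 0, f => ∀ s, 0 < s → 0 ≤ f s
  | n + 1, f => (∀ s, 0 < s → 0 ≤ f s) ∧
      ∃ g : ℝ → ℝ, (∀ s, 0 < s → HasDerivAt f (-(g s)) s) ∧ ComplMono n g

namespace ComplMono

lemma nonneg {n : ℕ} {f : ℝ → ℝ} (h : ComplMono n f) {s : ℝ} (hs : 0 < s) : 0 ≤ f s := by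
  cases n with
  | zero => exact h s hs
  | succ n => exact h.1 s hs

lemma of_succ {n : ℕ} {f : ℝ → ℝ} (h : ComplMono (n + 1) f) : ComplMono n f := by
  induction n generalizing f with
  | zero => exact h.1
  | succ n ih =>
    obtain ⟨h0, g, hg, hgm⟩ := h
    exact ⟨h0, g, hg, ih hgm⟩

lemma add {n : ℕ} {f g : ℝ → ℝ} (hf : ComplMono n f) (hg : ComplMono n g) :
    ComplMono n (fun s => f s + g s) := by
  induction n generalizing f g with
  | zero => exact fun s hs => add_nonneg (hf s hs) (hg s hs)
  | succ n ih =>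
    obtain ⟨hf0, f', hf', hfm⟩ := hf
    obtain ⟨hg0, g', hg', hgm⟩ := hg
    refine ⟨fun s hs => add_nonneg (hf0 s hs) (hg0 s hs), _, fun s hs => ?_, ih hfm hgm⟩
    have h : HasDerivAt (fun s => f s + g s) (-f' s + -g' s) s := (hf' s hs).add (hg' s hs)
    rwa [← neg_add] at h

lemma mul {n : ℕ} {f g : ℝ → ℝ} (hf : ComplMono n f) (hg : ComplMono n g) :
    ComplMono n (fun s => f s * g s) := by
  induction n generalizing f g with
  | zero => exact fun s hs => mul_nonneg (hf s hs) (hg s hs)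
  | succ n ih =>
    have hf1 := hf.of_succ
    have hg1 := hg.of_succ
    obtain ⟨hf0, f', hf', hfm⟩ := hf
    obtain ⟨hg0, g', hg', hgm⟩ := hg
    refine ⟨fun s hs => mul_nonneg (hf0 s hs) (hg0 s hs), _, fun s hs => ?_,
      (ih hfm hg1).add (ih hf1 hgm)⟩
    have h : HasDerivAt (fun s => f s * g s) (-f' s * g s + f s * -g' s) s :=
      (hf' s hs).mul (hg' s hs)
    rwa [show -f' s * g s + f s * -g' s = -(f' s * g s + f s * g' s) by ring] at h

lemma const_mul_rpow (n : ℕ) {a b : ℝ} (ha : 0 ≤ a) (hb : b ≤ 0) :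
    ComplMono n (fun s => a * s ^ b) := by
  induction n generalizing a b with
  | zero => intro s hs; positivity
  | succ n ih =>
    refine ⟨fun s hs => by positivity, fun s => (a * (-b)) * s ^ (b - 1), fun s hs => ?_,
      ih (mul_nonneg ha (by linarith)) (by linarith)⟩
    have h : HasDerivAt (fun s => a * s ^ b) (a * (b * s ^ (b - 1))) s :=
      (Real.hasDerivAt_rpow_const (p := b) (Or.inl hs.ne')).const_mul a
    rwa [show a * (b * s ^ (b - 1)) = -(a * (-b) * s ^ (b - 1)) by ring] at h

lemma exp_neg_rpow (n : ℕ) {ν : ℝ} (hν : ν ∈ Ioo (0 : ℝ) 1) :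
    ComplMono n (fun s => Real.exp (-s ^ ν)) := by
  induction n with
  | zero => intro s _; positivity
  | succ n ih =>
    refine ⟨fun s _ => by positivity, _, fun s hs => ?_,
      (const_mul_rpow n hν.1.le (by linarith [hν.2] : ν - 1 ≤ 0)).mul ih⟩
    have h : HasDerivAt (fun s => Real.exp (-s ^ ν))
        (Real.exp (-s ^ ν) * -(ν * s ^ (ν - 1))) s :=
      (Real.hasDerivAt_rpow_const (p := ν) (Or.inl hs.ne')).neg.exp
    rwa [show Real.exp (-s ^ ν) * -(ν * s ^ (ν - 1)) =
      -(ν * s ^ (ν - 1) * Real.exp (-s ^ ν)) by ring] at h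

/-- Derivatives being unique, the successive negated derivatives of a completely monotone function
are nonnegative. -/
lemma nonneg_of_hasDerivAt {n : ℕ} {f : ℝ → ℝ} (h : ComplMono n f) {D : ℕ → ℝ → ℝ}
    (h0 : ∀ s, 0 < s → D 0 s = f s)
    (hD : ∀ k s, 0 < s → HasDerivAt (D k) (-(D (k + 1) s)) s) {s : ℝ} (hs : 0 < s) :
    0 ≤ D n s := by
  induction n generalizing f D with
  | zero => rw [h0 s hs]; exact h.nonneg hs
  | succ n ih =>
    obtain ⟨-, g, hg, hgm⟩ := h
    refine ih hgm (D := fun k => D (k + 1)) (fun x hx => ?_) (fun k x hx => hD (k + 1) x hx)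
    have h1 : D 0 =ᶠ[𝓝 x] f := by
      filter_upwards [isOpen_Ioi.mem_nhds hx] with y hy using h0 y hy
    have h2 := (hD 0 x hx).unique ((hg x hx).congr_of_eventuallyEq h1)
    simpa using h2

end ComplMono

/-! ### Positivity from the Laplace transform -/

lemma integrableOn_pow_mul_exp (n : ℕ) {s : ℝ} (hs : 0 < s) :
    IntegrableOn (fun u : ℝ => u ^ n * Real.exp (-(s * u))) (Ioi 0) := by
  have := integrableOn_rpow_exp (a := n + 1) (by positivity) hs
  simpa using this

lemma integrableOn_pow_mul_exp_mul {p : ℝ → ℝ} (hp : Continuous p) {K : ℝ} (hK : ∀ u, |p u| ≤ K)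
    (n : ℕ) {s : ℝ} (hs : 0 < s) :
    IntegrableOn (fun u : ℝ => u ^ n * Real.exp (-(s * u)) * p u) (Ioi 0) :=
  (integrableOn_pow_mul_exp n hs).mul_bdd hp.aestronglyMeasurable (Eventually.of_forall hK)

/-- Differentiation under the integral, dominated near `s` by the integrand at rate `s / 2`. -/
lemma hasDerivAt_laplace {p : ℝ → ℝ} (hp : Continuous p) {K : ℝ} (hK : ∀ u, |p u| ≤ K)
    (n : ℕ) {s : ℝ} (hs : 0 < s) :
    HasDerivAt (fun s => ∫ u in Ioi (0 : ℝ), u ^ n * Real.exp (-(s * u)) * p u)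
      (-(∫ u in Ioi (0 : ℝ), u ^ (n + 1) * Real.exp (-(s * u)) * p u)) s := by
  have hK0 : 0 ≤ K := (abs_nonneg _).trans (hK 0)
  have := hasDerivAt_integral_of_dominated_loc_of_deriv_le (μ := volume.restrict (Ioi (0 : ℝ)))
    (F := fun s u => u ^ n * Real.exp (-(s * u)) * p u)
    (F' := fun s u => -(u ^ (n + 1) * Real.exp (-(s * u)) * p u))
    (bound := fun u => u ^ (n + 1) * Real.exp (-(s / 2 * u)) * K) (x₀ := s)
    (Ioi_mem_nhds (half_lt_self hs))
    (Eventually.of_forall fun x => by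
      apply Continuous.aestronglyMeasurable
      fun_prop)
    (integrableOn_pow_mul_exp_mul hp hK n hs)
    (by
      apply Continuous.aestronglyMeasurable
      fun_prop)
    ((ae_restrict_iff' measurableSet_Ioi).2 (Eventually.of_forall fun u hu x hx => by
      have hu' : (0 : ℝ) < u := hu
      have hx' : s / 2 < x := hx
      rw [norm_neg, norm_mul, Real.norm_of_nonneg (by positivity)]
      gcongr
      exact hK u))
    ((integrableOn_pow_mul_exp (n + 1) (half_pos hs)).mul_const K)
    (Eventually.of_forall fun u x _ => by
      have h1 : HasDerivAt (fun x : ℝ => -(x * u)) (-(1 * u)) x :=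
        ((hasDerivAt_id x).mul_const u).neg
      have h2 : HasDerivAt (fun x : ℝ => u ^ n * Real.exp (-(x * u)) * p u)
          (u ^ n * (Real.exp (-(x * u)) * -(1 * u)) * p u) x :=
        (h1.exp.const_mul (u ^ n)).mul_const (p u)
      rwa [show u ^ n * (Real.exp (-(x * u)) * -(1 * u)) * p u =
        -(u ^ (n + 1) * Real.exp (-(x * u)) * p u) by ring] at h2)
  simpa [integral_neg] using this.2

/-- The kernel `v exp (1 - v)` attains its maximum `1` only at `v = 1`, with an explicit gap. -/
lemma gammaKernel_le {v : ℝ} (hv : 0 < v) :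
    v * Real.exp (1 - v) ≤ 1 - ((v - 1) / (v + 1)) ^ 2 := by
  have h1 : (v + 1) / 2 ≤ Real.exp ((v - 1) / 2) := by
    have := Real.add_one_le_exp ((v - 1) / 2)
    linarith
  have h2 : ((v + 1) / 2) ^ 2 ≤ Real.exp (v - 1) := by
    calc _ ≤ Real.exp ((v - 1) / 2) ^ 2 := by gcongr
      _ = _ := by rw [← Real.exp_nat_mul]; congr 1; push_cast; ring
  have h3 : Real.exp (1 - v) ≤ (((v + 1) / 2) ^ 2)⁻¹ := by
    rw [show 1 - v = -(v - 1) by ring, Real.exp_neg]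
    gcongr
  calc v * Real.exp (1 - v) ≤ v * (((v + 1) / 2) ^ 2)⁻¹ := by gcongr
    _ = _ := by field_simp; ring

/-- Positivity half of Widder's inversion theorem. Were `p x < 0`, the kernels
`((u / x) exp (1 - u / x)) ^ n`, which concentrate at `u = x`, would make the integral of order `n`
at `(n + 1) / x` negative for large `n`. -/
lemma nonneg_of_laplace {p : ℝ → ℝ} (hp : Continuous p) {K : ℝ} (hK : ∀ u, |p u| ≤ K)
    (h : ∀ (n : ℕ) (s : ℝ), 0 < s → 0 ≤ ∫ u in Ioi (0 : ℝ), u ^ n * Real.exp (-(s * u)) * p u)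
    {x : ℝ} (hx : 0 < x) : 0 ≤ p x := by
  by_contra! hneg
  set w : ℝ → ℝ := fun u => (u / x) * Real.exp (1 - u / x) with hw
  have hwc : Continuous w := by fun_prop
  set g : ℝ → ℝ := fun u => Real.exp (-(1 / x * u)) * p u with hg
  have hgc : Continuous g := by fun_prop
  have hgi : IntegrableOn g (Ioi 0) := by
    have := integrableOn_pow_mul_exp_mul hp hK 0 (one_div_pos.2 hx)
    simpa [hg] using this
  have hw1 : w x = 1 := by simp [hw, hx.ne']
  have hw0 : ∀ u, 0 < u → 0 ≤ w u := fun u hu => by simp only [hw]; positivity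
  have hgx : g x < 0 := mul_neg_of_pos_of_neg (Real.exp_pos _) hneg
  have hwg : ∀ (n : ℕ) (u : ℝ), w u ^ n * g u = (Real.exp 1 / x) ^ n *
      (u ^ n * Real.exp (-((n + 1) / x * u)) * p u) := by
    intro n u
    simp only [hw, hg]
    have : Real.exp (-((n + 1) / x * u)) = Real.exp (-(u / x)) ^ n * Real.exp (-(1 / x * u)) := by
      rw [← Real.exp_nat_mul, ← Real.exp_add]
      congr 1
      field_simp
      ring
    rw [this, sub_eq_add_neg, Real.exp_add]
    ring
  have hI : ∀ n : ℕ, 0 ≤ ∫ u in Ioi (0 : ℝ), w u ^ n * g u := by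
    intro n
    have h1 := h n ((n + 1) / x) (by positivity)
    simp_rw [hwg]
    rw [integral_const_mul]
    positivity
  have hwi : ∀ n : ℕ, IntegrableOn (fun u => w u ^ n * g u) (Ioi 0) := by
    intro n
    simp_rw [hwg]
    exact (integrableOn_pow_mul_exp_mul hp hK n (by positivity)).const_mul _
  -- a neighbourhood of `x` on which `g` is negative, and its complement, where `w ≤ q < 1`
  obtain ⟨δ, hδ, hδg⟩ : ∃ δ > 0, ∀ u, |u - x| < δ → g u < g x / 2 := by
    have := (hgc.tendsto x).eventually_lt_const (show g x < g x / 2 by linarith)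
    rw [Metric.eventually_nhds_iff] at this
    obtain ⟨δ, h1, h2⟩ := this
    exact ⟨δ, h1, fun u hu => h2 (by rwa [Real.dist_eq])⟩
  obtain ⟨q, hq0, hq1, hq⟩ : ∃ q, 0 ≤ q ∧ q < 1 ∧ ∀ u, 0 < u → δ ≤ |u - x| → w u ≤ q := by
    refine ⟨1 - (δ / (δ + 2 * x)) ^ 2, ?_, ?_, fun u hu hud => ?_⟩
    · have h1 : δ / (δ + 2 * x) ≤ 1 := by
        rw [div_le_one (by positivity)]; linarith
      have h2 : 0 ≤ δ / (δ + 2 * x) := by positivity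
      nlinarith
    · have : 0 < δ / (δ + 2 * x) := by positivity
      nlinarith
    · refine (gammaKernel_le (div_pos hu hx)).trans ?_
      have h1 : δ / (δ + 2 * x) ≤ |(u / x - 1) / (u / x + 1)| := by
        have h2 : (u / x - 1) / (u / x + 1) = (u - x) / (u + x) := by field_simp
        rw [h2, abs_div, abs_of_pos (by positivity : 0 < u + x),
          div_le_div_iff₀ (by positivity) (by positivity)]
        have h3 : u + x ≤ |u - x| + 2 * x := by linarith [le_abs_self (u - x)]
        nlinarith
      have h2 : (δ / (δ + 2 * x)) ^ 2 ≤ |(u / x - 1) / (u / x + 1)| ^ 2 := by gcongr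
      rw [sq_abs] at h2
      linarith
  -- a smaller neighbourhood on which `w` exceeds some `q' > q`
  set q' := (1 + q) / 2 with hq'
  obtain ⟨η, hη, hηw, hηδ, hηx⟩ : ∃ η > 0, (∀ u, |u - x| < η → q' ≤ w u) ∧ η ≤ δ ∧ η ≤ x := by
    have := (hwc.tendsto x).eventually_const_lt (show q' < w x by rw [hw1]; linarith)
    rw [Metric.eventually_nhds_iff] at this
    obtain ⟨η, h1, h2⟩ := this
    refine ⟨min η (min δ x), by positivity, fun u hu => ?_, ?_, ?_⟩
    · exact (h2 (by rw [Real.dist_eq]; exact hu.trans_le (min_le_left _ _))).le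
    · exact (min_le_right _ _).trans (min_le_left _ _)
    · exact (min_le_right _ _).trans (min_le_right _ _)
  have hq'0 : 0 < q' := by linarith
  set A : Set ℝ := Ioo (x - η) (x + η) with hA
  set G := ∫ u in Ioi (0 : ℝ), |g u| with hGdef
  have hub : ∀ n : ℕ, ∫ u in Ioi (0 : ℝ), w u ^ n * g u ≤
      q' ^ n * (g x / 2) * (2 * η) + q ^ n * G := by
    intro n
    have hAI : A ⊆ Ioi 0 := fun u hu => by
      have := hu.1
      simp only [mem_Ioi]; linarith
    have hi1 : Integrable (A.indicator fun _ => q' ^ n * (g x / 2)) (volume.restrict (Ioi 0)) :=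
      ((integrable_indicator_iff measurableSet_Ioo).2
        (integrableOn_const (by simp))).restrict
    have hi2 : IntegrableOn (fun u => q ^ n * |g u|) (Ioi 0) := hgi.abs.const_mul _
    have hle : ∫ u in Ioi (0 : ℝ), w u ^ n * g u ≤
        ∫ u in Ioi (0 : ℝ), (A.indicator (fun _ => q' ^ n * (g x / 2)) u + q ^ n * |g u|) := by
      refine setIntegral_mono_on (hwi n) (hi1.add hi2) measurableSet_Ioi fun u hu => ?_
      have hu' : (0 : ℝ) < u := hu
      have hwn : 0 ≤ w u ^ n := pow_nonneg (hw0 u hu') n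
      have hqg : 0 ≤ q ^ n * |g u| := by positivity
      by_cases huA : u ∈ A
      · have hux : |u - x| < η := by
          rw [abs_lt]
          constructor <;> linarith [huA.1, huA.2]
        have h1 := hδg u (hux.trans_le hηδ)
        have h2 : q' ^ n ≤ w u ^ n := pow_le_pow_left₀ hq'0.le (hηw u hux) n
        rw [indicator_of_mem huA]
        nlinarith
      · rw [indicator_of_notMem huA, zero_add]
        rcases lt_or_ge |u - x| δ with hud | hud
        · have h1 := hδg u hud
          nlinarith
        · have h2 : w u ^ n ≤ q ^ n := pow_le_pow_left₀ (hw0 u hu') (hq u hu' hud) n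
          exact (mul_le_mul_of_nonneg_left (le_abs_self _) hwn).trans (by gcongr)
    refine hle.trans (le_of_eq ?_)
    rw [integral_add hi1 hi2, integral_const_mul, integral_indicator measurableSet_Ioo,
      Measure.restrict_restrict measurableSet_Ioo, inter_eq_left.2 hAI, setIntegral_const,
      Real.volume_real_Ioo_of_le (by linarith), smul_eq_mul]
    ring
  have hlim : Tendsto (fun n : ℕ => (q / q') ^ n * G) atTop (𝓝 (0 * G)) :=
    (tendsto_pow_atTop_nhds_zero_of_lt_one (by positivity)
      ((div_lt_one hq'0).2 (by linarith))).mul_const G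
  rw [zero_mul] at hlim
  obtain ⟨n, hn⟩ := (hlim.eventually_lt_const
    (show 0 < -(g x / 2 * (2 * η)) by nlinarith)).exists
  have h1 := (hI n).trans (hub n)
  have h2 : q ^ n * G = q' ^ n * ((q / q') ^ n * G) := by
    have hne : q' ^ n ≠ 0 := by positivity
    rw [div_pow q q', ← mul_assoc, mul_div_cancel₀ _ hne]
  rw [h2] at h1
  have h3 : 0 < q' ^ n := by positivity
  nlinarith

lemma stableDensity_nonneg {ν : ℝ} (hν : ν ∈ Ioo (0 : ℝ) 1) {x : ℝ} (hx : 0 < x) :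
    0 ≤ stableDensity ν x := by
  obtain ⟨K, -, hK⟩ := exists_bound_stableDensity (ν := ν)
  have hp := continuous_stableDensity hν
  refine nonneg_of_laplace hp hK (fun n s hs => ?_) hx
  refine (ComplMono.exp_neg_rpow n hν).nonneg_of_hasDerivAt
    (D := fun n s => ∫ u in Ioi (0 : ℝ), u ^ n * Real.exp (-(s * u)) * stableDensity ν u)
    (fun s hs => ?_) (fun k s hs => hasDerivAt_laplace hp hK k hs) hs
  simpa using integral_exp_mul_stableDensity hν hs

/-! ### Moments -/

/-- Fatou's lemma for the Laplace transform as the rate tends to `0`. -/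
lemma lintegral_stableDensity_le {ν : ℝ} (hν : ν ∈ Ioo (0 : ℝ) 1) :
    ∫⁻ u in Ioi (0 : ℝ), ENNReal.ofReal (stableDensity ν u) ≤ 1 := by
  obtain ⟨K, -, hK⟩ := exists_bound_stableDensity (ν := ν)
  have hp := continuous_stableDensity hν
  set f : ℕ → ℝ → ENNReal := fun n u =>
    ENNReal.ofReal (Real.exp (-(1 / ((n : ℝ) + 1) * u)) * stableDensity ν u) with hf
  have hf1 : ∀ n, ∫⁻ u in Ioi (0 : ℝ), f n u ≤ 1 := by
    intro n
    have hs : (0 : ℝ) < 1 / ((n : ℝ) + 1) := by positivity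
    have hi := integrableOn_pow_mul_exp_mul hp hK 0 hs
    simp only [pow_zero, one_mul] at hi
    rw [← ofReal_integral_eq_lintegral_ofReal hi
      ((ae_restrict_iff' measurableSet_Ioi).2 (Eventually.of_forall fun u hu =>
        mul_nonneg (Real.exp_pos _).le (stableDensity_nonneg hν hu))),
      integral_exp_mul_stableDensity hν hs, ENNReal.ofReal_le_one, Real.exp_le_one_iff]
    have := Real.rpow_nonneg hs.le ν
    linarith
  have hlim : ∀ u, Tendsto (fun n => f n u) atTop (𝓝 (ENNReal.ofReal (stableDensity ν u))) := by
    intro u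
    refine (ENNReal.continuous_ofReal.tendsto _).comp ?_
    have h1 : Tendsto (fun n : ℕ => Real.exp (-(1 / ((n : ℝ) + 1) * u)) * stableDensity ν u) atTop
        (𝓝 (Real.exp (-(0 * u)) * stableDensity ν u)) :=
      ((Real.continuous_exp.tendsto _).comp
        (tendsto_one_div_add_atTop_nhds_zero_nat.mul_const u).neg).mul_const _
    simpa using h1
  calc ∫⁻ u in Ioi (0 : ℝ), ENNReal.ofReal (stableDensity ν u)
      = ∫⁻ u in Ioi (0 : ℝ), liminf (fun n => f n u) atTop := by
        simp_rw [fun u => (hlim u).liminf_eq]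
    _ ≤ liminf (fun n => ∫⁻ u in Ioi (0 : ℝ), f n u) atTop :=
        lintegral_liminf_le fun n => by
          apply Measurable.ennreal_ofReal
          apply Continuous.measurable
          fun_prop
    _ ≤ 1 := liminf_le_of_le (by isBoundedDefault) fun b hb => by
        obtain ⟨n, hn⟩ := hb.exists
        exact hn.trans (hf1 n)

/-- The moments of negative order of the stable density. For `Λ > 0`, write
`Γ(ν Λ) u ^ (-ν Λ) = ∫ s ^ (ν Λ - 1) exp (-s u) ds`, exchange the integrals by Tonelli and insert the
Laplace transform; the resulting `∫ s ^ (ν Λ - 1) exp (-s ^ ν) ds` is a Gamma integral. -/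
lemma negMoment_stableDensity {ν : ℝ} (hν : ν ∈ Ioo (0 : ℝ) 1) {Λ : ℝ} (hΛ : 0 ≤ Λ) :
    IntegrableOn (fun u => u ^ (-(ν * Λ)) * stableDensity ν u) (Ioi 0) ∧
      ∫ u in Ioi (0 : ℝ), u ^ (-(ν * Λ)) * stableDensity ν u ≤
        Real.Gamma (1 + Λ) / Real.Gamma (1 + ν * Λ) := by
  obtain ⟨K, -, hK⟩ := exists_bound_stableDensity (ν := ν)
  have hp := continuous_stableDensity hν
  have hν0 := hν.1
  have hnn : ∀ᵐ u ∂volume.restrict (Ioi (0 : ℝ)), 0 ≤ stableDensity ν u :=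
    (ae_restrict_iff' measurableSet_Ioi).2
      (Eventually.of_forall fun u hu => stableDensity_nonneg hν hu)
  rcases hΛ.eq_or_lt with rfl | hΛ
  · have h1 := lintegral_stableDensity_le hν
    simp only [mul_zero, neg_zero, Real.rpow_zero, one_mul, add_zero, Real.Gamma_one, div_one]
    refine ⟨⟨hp.aestronglyMeasurable, ?_⟩, ?_⟩
    · rw [hasFiniteIntegral_iff_ofReal hnn]
      exact h1.trans_lt ENNReal.one_lt_top
    · rw [integral_eq_lintegral_of_nonneg_ae hnn hp.aestronglyMeasurable]
      exact ENNReal.toReal_le_of_le_ofReal zero_le_one (by simpa using h1)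
  set a := ν * Λ with ha
  have ha0 : 0 < a := mul_pos hν.1 hΛ
  have hΓ : 0 < Real.Gamma a := Real.Gamma_pos_of_pos ha0
  set F : ℝ → ℝ → ℝ := fun u s => s ^ (a - 1) * (Real.exp (-(s * u)) * stableDensity ν u) with hF
  have hexp : ∫ s in Ioi (0 : ℝ), s ^ (a - 1) * Real.exp (-s ^ ν) = 1 / ν * Real.Gamma Λ := by
    rw [integral_rpow_mul_exp_neg_rpow hν.1 (by linarith)]
    congr 2
    rw [ha]
    field_simp
    ring
  have hexpi : IntegrableOn (fun s : ℝ => s ^ (a - 1) * Real.exp (-s ^ ν)) (Ioi 0) := by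
    -- a non-integrable function would have integral `0`
    refine not_imp_comm.1 integral_undef ?_
    rw [hexp]
    have := Real.Gamma_pos_of_pos hΛ
    positivity
  have hu : ∀ s ∈ Ioi (0 : ℝ), ∫ u in Ioi (0 : ℝ), F u s = s ^ (a - 1) * Real.exp (-s ^ ν) := by
    intro s hs
    simp only [hF]
    rw [integral_const_mul, integral_exp_mul_stableDensity hν hs]
  have hs : ∀ u ∈ Ioi (0 : ℝ), ∫ s in Ioi (0 : ℝ), F u s =
      Real.Gamma a * (u ^ (-a) * stableDensity ν u) := by
    intro u hu
    have hu' : (0 : ℝ) < u := hu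
    have h1 : ∀ s, F u s = stableDensity ν u * (s ^ (a - 1) * Real.exp (-(u * s))) := by
      intro s
      simp only [hF]
      rw [mul_comm u s]
      ring
    simp_rw [h1]
    rw [integral_const_mul, Real.integral_rpow_mul_exp_neg_mul_Ioi ha0 hu', one_div,
      Real.inv_rpow hu'.le, Real.rpow_neg hu'.le]
    ring
  have hint : Integrable (Function.uncurry F)
      ((volume.restrict (Ioi 0)).prod (volume.restrict (Ioi 0))) := by
    refine (integrable_prod_iff' ?_).2 ⟨?_, ?_⟩
    · apply Measurable.aestronglyMeasurable
      have h1 : Measurable fun p : ℝ × ℝ => Real.exp (-(p.2 * p.1)) * stableDensity ν p.1 := by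
        apply Continuous.measurable
        fun_prop
      exact (measurable_snd.pow_const _).mul h1
    · refine (ae_restrict_iff' measurableSet_Ioi).2 (Eventually.of_forall fun s hs => ?_)
      have hi := integrableOn_pow_mul_exp_mul hp hK 0 hs
      simp only [pow_zero, one_mul] at hi
      exact hi.const_mul (s ^ (a - 1))
    · refine hexpi.congr_fun (fun s hs' => ?_) measurableSet_Ioi
      have hs0 : (0 : ℝ) < s := hs'
      simp only
      rw [← hu s hs']
      refine setIntegral_congr_fun measurableSet_Ioi fun u hu' => ?_
      have := stableDensity_nonneg hν hu'
      simp only [Function.uncurry_apply_pair, hF]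
      rw [Real.norm_of_nonneg (by positivity)]
  have hi : IntegrableOn (fun u => Real.Gamma a * (u ^ (-a) * stableDensity ν u)) (Ioi 0) :=
    IntegrableOn.congr_fun hint.integral_prod_left hs measurableSet_Ioi
  refine ⟨?_, le_of_eq ?_⟩
  · have := hi.const_mul (Real.Gamma a)⁻¹
    simpa [IntegrableOn, hΓ.ne'] using this
  · have h1 := integral_integral_swap hint
    rw [setIntegral_congr_fun measurableSet_Ioi hs, setIntegral_congr_fun measurableSet_Ioi hu,
      hexp, integral_const_mul] at h1
    rw [add_comm 1 Λ, add_comm 1 a, Real.Gamma_add_one hΛ.ne', Real.Gamma_add_one ha0.ne',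
      eq_div_iff (by positivity), ha]
    have h2 : ν * (1 / ν * Real.Gamma Λ) = Real.Gamma Λ := by field_simp
    rw [← ha, ← h2, ← h1, ha]
    ring

/-- The moments of `φ_ν`, obtained from those of `ψ_ν` by substituting `u = Θ ^ (-1 / ν)`. -/
lemma moment_phiNu {ν : ℝ} (hν : ν ∈ Ioo (0 : ℝ) 1) {Λ : ℝ} (hΛ : 0 ≤ Λ) :
    IntegrableOn (fun Θ => Θ ^ Λ * phiNu ν Θ) (Ioi 0) ∧
      ∫ Θ in Ioi (0 : ℝ), Θ ^ Λ * phiNu ν Θ ≤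
        Real.Gamma (1 + Λ) / Real.Gamma (1 + ν * Λ) := by
  obtain ⟨h1, h2⟩ := negMoment_stableDensity hν hΛ
  have hν0 := hν.1
  have hp : -(1 / ν) ≠ 0 := by
    have : 0 < 1 / ν := by positivity
    linarith
  set g : ℝ → ℝ := fun u => u ^ (-(ν * Λ)) * stableDensity ν u with hg
  have heq : EqOn (fun Θ => (|-(1 / ν)| * Θ ^ (-(1 / ν) - 1)) • g (Θ ^ (-(1 / ν))))
      (fun Θ => Θ ^ Λ * phiNu ν Θ) (Ioi 0) := by
    intro Θ hΘ
    have hΘ' : (0 : ℝ) < Θ := hΘ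
    simp only [hg, phiNu, smul_eq_mul]
    rw [psiNu_eq_stableDensity hν (by positivity), ← Real.rpow_mul hΘ'.le,
      show -(1 / ν) * -(ν * Λ) = Λ by field_simp, abs_neg, abs_of_pos (by positivity),
      show -(1 / ν) - 1 = -1 - 1 / ν by ring]
    ring
  refine ⟨?_, ?_⟩
  · exact ((integrableOn_Ioi_comp_rpow_iff g hp).2 h1).congr_fun heq measurableSet_Ioi
  · rw [← setIntegral_congr_fun measurableSet_Ioi heq, integral_comp_rpow_Ioi g hp]
    exact h2

lemma phiNu_nonneg {ν : ℝ} (hν : ν ∈ Ioo (0 : ℝ) 1) {Θ : ℝ} (hΘ : 0 < Θ) : 0 ≤ phiNu ν Θ := by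
  have hν0 := hν.1
  have hu : 0 < Θ ^ (-(1 / ν)) := by positivity
  have := stableDensity_nonneg hν hu
  rw [phiNu, psiNu_eq_stableDensity hν hu]
  positivity

lemma continuousOn_phiNu {ν : ℝ} (hν : ν ∈ Ioo (0 : ℝ) 1) : ContinuousOn (phiNu ν) (Ioi 0) := by
  have hp := continuous_stableDensity hν
  have hpow : ∀ b : ℝ, ContinuousOn (fun Θ : ℝ => Θ ^ b) (Ioi 0) := fun b Θ hΘ =>
    (Real.continuousAt_rpow_const Θ b (Or.inl (ne_of_gt hΘ))).continuousWithinAt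
  have h : ContinuousOn (fun Θ : ℝ => (1 / ν) * Θ ^ (-1 - 1 / ν) *
      stableDensity ν (Θ ^ (-(1 / ν)))) (Ioi 0) :=
    (continuousOn_const.mul (hpow _)).mul (hp.comp_continuousOn (hpow _))
  refine h.congr fun Θ hΘ => ?_
  have hΘ' : (0 : ℝ) < Θ := hΘ
  rw [phiNu, psiNu_eq_stableDensity hν (by positivity)]

end StableDensity

/-- Let `C : (0,∞) → B(X)` be strongly continuous with `‖C(s)‖ ≤ L_μ / s^μ`
(`C(s)` plays the role of `A^μ T(s)`). For every `t > 0` and every `y ∈ X`,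
the Bochner integral `ν ∫₀^∞ Θ φ_ν(Θ) C(t^ν Θ) y dΘ` is well defined and its
norm is at most `(ν L_μ / t^{νμ}) · (Γ(2−μ)/Γ(1+ν(1−μ))) · ‖y‖`. -/
theorem AmuKnu_well_defined_and_bounded
    {X : Type*} [NormedAddCommGroup X] [NormedSpace ℂ X] [CompleteSpace X]
    (ν : ℝ) (hν : ν ∈ Set.Ioo (0 : ℝ) 1)
    (μ : ℝ) (hμ : μ ∈ Set.Ioc (0 : ℝ) 1) (L_μ : ℝ) (hL : 0 < L_μ)
    (C : ℝ → (X →L[ℂ] X))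
    (hCcont : ∀ y : X, ContinuousOn (fun s => C s y) (Set.Ioi 0))
    (hC : ∀ s : ℝ, 0 < s → ‖C s‖ ≤ L_μ / s ^ μ)
    (t : ℝ) (ht : 0 < t) (y : X) :
    IntegrableOn (fun Θ : ℝ => (Θ * phiNu ν Θ) • C (t ^ ν * Θ) y) (Set.Ioi 0) ∧
      ‖ν • ∫ Θ in Set.Ioi (0 : ℝ), (Θ * phiNu ν Θ) • C (t ^ ν * Θ) y‖ ≤
        ν * L_μ / t ^ (ν * μ) * (Real.Gamma (2 - μ) / Real.Gamma (1 + ν * (1 - μ))) * ‖y‖ := by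
  have hν0 := hν.1
  have hcont : ContinuousOn (fun Θ : ℝ => (Θ * phiNu ν Θ) • C (t ^ ν * Θ) y) (Set.Ioi 0) := by
    refine (continuousOn_id.mul (continuousOn_phiNu hν)).smul
      ((hCcont y).comp (by fun_prop) fun Θ hΘ => ?_)
    have hΘ' : (0 : ℝ) < Θ := hΘ
    exact Set.mem_Ioi.2 (by positivity)
  obtain ⟨hmi, hmle⟩ := moment_phiNu hν (Λ := 1 - μ) (by linarith [hμ.2])
  -- the factors `Θ` and `(t ^ ν * Θ) ^ (-μ)` combine to the weight `Θ ^ (1 - μ)`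
  have hbound : ∀ Θ ∈ Set.Ioi (0 : ℝ), ‖(Θ * phiNu ν Θ) • C (t ^ ν * Θ) y‖ ≤
      L_μ / t ^ (ν * μ) * ‖y‖ * (Θ ^ (1 - μ) * phiNu ν Θ) := by
    intro Θ hΘ
    have hΘ' : (0 : ℝ) < Θ := hΘ
    have hφ := phiNu_nonneg hν hΘ'
    rw [norm_smul, Real.norm_of_nonneg (by positivity)]
    have h1 : ‖C (t ^ ν * Θ) y‖ ≤ L_μ / (t ^ ν * Θ) ^ μ * ‖y‖ :=
      (C _).le_of_opNorm_le (hC _ (by positivity)) y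
    calc Θ * phiNu ν Θ * ‖C (t ^ ν * Θ) y‖
        ≤ Θ * phiNu ν Θ * (L_μ / (t ^ ν * Θ) ^ μ * ‖y‖) := by gcongr
      _ = _ := by
        rw [Real.mul_rpow (by positivity) hΘ'.le, ← Real.rpow_mul ht.le,
          Real.rpow_sub hΘ', Real.rpow_one]
        field_simp
  have hdom : IntegrableOn
      (fun Θ : ℝ => L_μ / t ^ (ν * μ) * ‖y‖ * (Θ ^ (1 - μ) * phiNu ν Θ)) (Set.Ioi 0) :=
    hmi.const_mul _
  have hae := (ae_restrict_iff' (μ := volume) measurableSet_Ioi).2 (Filter.Eventually.of_forall hbound)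
  refine ⟨hdom.mono' (hcont.aestronglyMeasurable measurableSet_Ioi) hae, ?_⟩
  have hle := norm_integral_le_of_norm_le hdom hae
  rw [integral_const_mul] at hle
  rw [norm_smul, Real.norm_of_nonneg hν0.le, show 2 - μ = 1 + (1 - μ) by ring]
  calc _ ≤ ν * (L_μ / t ^ (ν * μ) * ‖y‖ *
        (Real.Gamma (1 + (1 - μ)) / Real.Gamma (1 + ν * (1 - μ)))) := by
        gcongr
        exact hle.trans (by gcongr)
    _ = _ := by ring
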